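/- arXiv:2110.11675 — 2 statements merged into one kernel-verified Lean document; each statement's English description precedes it below -/
import Mathlib

section
/- Let φ_1, …, φ_N be contractive similitudes on ℝ^d, let C = C_1 ∪ ⋯ ∪ C_m (m ≥ 2) be a union of pairwise disjoint arcs, and let K be the attractor of the IFS with condensation {C; φ_1, …, φ_N}. Assume: K is an arc with a homeomorphism h : [0,1] → K; K decomposes as γ_1 + ⋯ + γ_{m+N}, where γ_1, …, γ_{m+N} is a rearrangement of C_1, …, C_m, φ_1(K), …, φ_N(K) with γ_1 and γ_{m+N} in {C_1, …, C_m}; the attractor E of {φ_1, …, φ_N} satisfies s := dim_H E > 1 and the s-dimensional Hausdorff measure of E is finite, H^s(E) < ∞. Define f : K → ℝ by f(z) = H^s(h([0, h^{−1}(z)]) ∩ E). Then for every ε > 0 there exists δ > 0 such that for all z_1, z_2 ∈ K with 0 < |z_1 − z_2| < δ, one has |f(z_1) − f(z_2)| ≤ ε |z_1 − z_2|. -/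
open Set MeasureTheory

noncomputable section

/-- The attractor `E` is contained in `K`. -/
lemma wk_subset {X : Type*} [MetricSpace X] {N : ℕ} (φ : Fin N → X → X)
    (ρ : Fin N → ℝ) (hρ : ∀ i, ρ i ∈ Set.Ioo (0 : ℝ) 1)
    (hsim : ∀ i x y, dist (φ i x) (φ i y) = ρ i * dist x y)
    (K E : Set X) (hKne : K.Nonempty) (hKc : IsCompact K)
    (hK : ∀ i, ∀ x ∈ K, φ i x ∈ K)
    (hEne : E.Nonempty) (hEc : IsCompact E) (hE : E = ⋃ i, φ i '' E) : E ⊆ K := by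
  obtain ⟨x, hx, hmax⟩ := hEc.exists_isMaxOn hEne (f := fun x => Metric.infDist x K)
    (Metric.continuous_infDist_pt K).continuousOn
  have hx' := hx
  rw [hE] at hx'
  obtain ⟨i, y, hy, rfl⟩ := mem_iUnion.1 hx'
  obtain ⟨k, hk, hk'⟩ := hKc.exists_infDist_eq_dist hKne y
  have h1 : Metric.infDist (φ i y) K ≤ ρ i * Metric.infDist y K := by
    rw [hk', ← hsim]
    exact Metric.infDist_le_dist_of_mem (hK i k hk)
  have h2 : Metric.infDist y K ≤ Metric.infDist (φ i y) K := hmax hy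
  have h3 : 0 ≤ Metric.infDist y K := Metric.infDist_nonneg
  have h4 := (hρ i).2
  have h5 : Metric.infDist y K = 0 := by nlinarith
  intro z hz
  have h6 : Metric.infDist z K ≤ Metric.infDist (φ i y) K := hmax hz
  have h7 : Metric.infDist z K = 0 := by
    apply le_antisymm _ Metric.infDist_nonneg
    rw [h5] at h1; linarith
  exact (hKc.isClosed.mem_iff_infDist_zero hKne).2 h7

/-- Conjugating a continuous injective self map of the arc to the parameter interval. -/
lemma wk_conj {X : Type*} [MetricSpace X] (φ : X → X) (hφc : Continuous φ)
    (hφi : Function.Injective φ) (K : Set X)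
    (h : ℝ → X) (hcont : ContinuousOn h (Set.Icc 0 1)) (hinj : Set.InjOn h (Set.Icc 0 1))
    (himg : h '' Set.Icc 0 1 = K) (a b : ℝ) (ha : 0 < a) (hb : b < 1)
    (him : h '' Icc a b = φ '' K) :
    ∃ g : ℝ → ℝ, (∀ v ∈ Icc (0:ℝ) 1, g v ∈ Icc a b ∧ h (g v) = φ (h v)) ∧
      (∀ x ∈ Icc a b, ∃ v ∈ Icc (0:ℝ) 1, g v = x) ∧
      (StrictMonoOn g (Icc 0 1) ∨ StrictAntiOn g (Icc 0 1)) := by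
  have hsub : Icc a b ⊆ Icc (0:ℝ) 1 := Icc_subset_Icc ha.le hb.le
  have hex : ∀ v : ℝ, ∃ w : ℝ, v ∈ Icc (0:ℝ) 1 → w ∈ Icc a b ∧ h w = φ (h v) := by
    intro v
    by_cases hv : v ∈ Icc (0:ℝ) 1
    · have : φ (h v) ∈ h '' Icc a b := by
        rw [him, ← himg]; exact mem_image_of_mem _ (mem_image_of_mem _ hv)
      obtain ⟨w, hw, hw'⟩ := this
      exact ⟨w, fun _ => ⟨hw, hw'⟩⟩
    · exact ⟨0, fun h => absurd h hv⟩
  choose g hg using hex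
  have ginj : InjOn g (Icc 0 1) := by
    intro x hx y hy hxy
    apply hinj hx hy
    apply hφi
    rw [← (hg x hx).2, ← (hg y hy).2, hxy]
  have gcont : ContinuousOn g (Icc 0 1) := by
    have hH : Topology.IsClosedEmbedding ((Icc (0:ℝ) 1).restrict h) :=
      (continuousOn_iff_continuous_restrict.1 hcont).isClosedEmbedding
        (injOn_iff_injective.1 hinj)
    let G : Icc (0:ℝ) 1 → Icc (0:ℝ) 1 := fun v => ⟨g v, hsub (hg v v.2).1⟩
    have hG : Continuous G := by
      rw [hH.isEmbedding.continuous_iff]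
      have : (Icc (0:ℝ) 1).restrict h ∘ G = φ ∘ (Icc (0:ℝ) 1).restrict h := by
        funext v
        exact (hg v v.2).2
      rw [this]
      exact hφc.comp (continuousOn_iff_continuous_restrict.1 hcont)
    rw [continuousOn_iff_continuous_restrict]
    exact continuous_subtype_val.comp hG
  refine ⟨g, hg, ?_, gcont.strictMonoOn_of_injOn_Icc' zero_le_one ginj⟩
  intro x hx
  have : h x ∈ φ '' K := by rw [← him]; exact mem_image_of_mem _ hx
  rw [← himg] at this
  obtain ⟨_, ⟨v, hv, rfl⟩, hv'⟩ := this
  refine ⟨v, hv, hinj (hsub (hg v hv).1) (hsub hx) ?_⟩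
  rw [(hg v hv).2, hv']

/-- One step of the renormalization. -/
lemma wk_step {X : Type*} [MetricSpace X] {N : ℕ} (φ : Fin N → X → X)
    (hφc : ∀ i, Continuous (φ i)) (hφi : ∀ i, Function.Injective (φ i))
    (K E : Set X) (hEK : E ⊆ K) (hEc : IsCompact E) (hE : E = ⋃ i, φ i '' E)
    (h : ℝ → X) (hcont : ContinuousOn h (Set.Icc 0 1)) (hinj : Set.InjOn h (Set.Icc 0 1))
    (himg : h '' Set.Icc 0 1 = K) (a b : Fin N → ℝ) (ha : ∀ i, 0 < a i) (hb : ∀ i, b i < 1)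
    (him : ∀ i, h '' Icc (a i) (b i) = φ i '' K)
    (hord : ∀ i j, i ≠ j → b i ≤ a j ∨ b j ≤ a i) :
    ∃ c > (0:ℝ), ∀ u ∈ Icc (0:ℝ) 1, ∀ v ∈ Icc (0:ℝ) 1,
      (h '' uIcc u v ∩ E = ∅) ∨ c ≤ dist (h u) (h v) ∨
      ∃ i, ∃ u' ∈ Icc (0:ℝ) 1, ∃ v' ∈ Icc (0:ℝ) 1, h u = φ i (h u') ∧ h v = φ i (h v') ∧
        h '' uIcc u v ∩ E ⊆ φ i '' (h '' uIcc u' v' ∩ E) := by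
  choose g hg gsurj gmono using fun i =>
    wk_conj (φ i) (hφc i) (hφi i) K h hcont hinj himg (a i) (b i) (ha i) (hb i) (him i)
  have hsub : ∀ i, Icc (a i) (b i) ⊆ Icc (0:ℝ) 1 := fun i => Icc_subset_Icc (ha i).le (hb i).le
  -- parameters of points of `E` are interior
  have hEint : ∀ x ∈ Icc (0:ℝ) 1, h x ∈ E → x ∈ Ioo (0:ℝ) 1 := by
    intro x hx hxE
    rw [hE] at hxE
    obtain ⟨i, y, hy, hyx⟩ := mem_iUnion.1 hxE
    have : h x ∈ h '' Icc (a i) (b i) := by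
      rw [him, ← hyx]; exact mem_image_of_mem _ (hEK hy)
    obtain ⟨w, hw, hwx⟩ := this
    have := hinj (hsub i hw) hx hwx
    subst this
    exact ⟨(ha i).trans_le hw.1, hw.2.trans_lt (hb i)⟩
  have hgint : ∀ i, ∀ v ∈ Ioo (0:ℝ) 1, g i v ∈ Ioo (a i) (b i) := by
    intro i v hv
    have h0 : (0:ℝ) ∈ Icc (0:ℝ) 1 := by simp
    have h1 : (1:ℝ) ∈ Icc (0:ℝ) 1 := by simp
    have hv' := Ioo_subset_Icc_self hv
    rcases gmono i with hm | hm
    · exact ⟨(hg i 0 h0).1.1.trans_lt (hm h0 hv' hv.1), (hm hv' h1 hv.2).trans_le (hg i 1 h1).1.2⟩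
    · exact ⟨(hg i 1 h1).1.1.trans_lt (hm hv' h1 hv.2), (hm h0 hv' hv.1).trans_le (hg i 0 h0).1.2⟩
  have hEloc : ∀ x ∈ Icc (0:ℝ) 1, h x ∈ E → ∃ i, ∃ w ∈ Icc (0:ℝ) 1, h w ∈ E ∧ x = g i w ∧
      x ∈ Ioo (a i) (b i) := by
    intro x hx hxE
    rw [hE] at hxE
    obtain ⟨i, y, hy, hyx⟩ := mem_iUnion.1 hxE
    have hyK := hEK hy
    rw [← himg] at hyK
    obtain ⟨w, hw, rfl⟩ := hyK
    have hxw : x = g i w := by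
      apply hinj hx (hsub i (hg i w hw).1)
      rw [(hg i w hw).2, hyx]
    refine ⟨i, w, hw, hy, hxw, ?_⟩
    rw [hxw]
    exact hgint i w (hEint w hw hy)
  -- Lebesgue number
  have hclosed : IsClosed (Icc (0:ℝ) 1 ∩ h ⁻¹' E) :=
    hcont.preimage_isClosed_of_isClosed isClosed_Icc hEc.isClosed
  obtain ⟨η, hη, hleb⟩ := lebesgue_number_lemma_of_metric (s := Icc (0:ℝ) 1)
    (c := fun o : Option (Fin N) => o.elim (Icc (0:ℝ) 1 ∩ h ⁻¹' E)ᶜ fun i => Ioo (a i) (b i))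
    isCompact_Icc (by
      rintro (_ | i)
      · exact hclosed.isOpen_compl
      · exact isOpen_Ioo) (by
      intro x hx
      by_cases hxE : h x ∈ E
      · obtain ⟨i, w, -, -, -, hi⟩ := hEloc x hx hxE
        exact mem_iUnion.2 ⟨some i, hi⟩
      · exact mem_iUnion.2 ⟨none, fun hh => hxE hh.2⟩)
  -- uniform separation
  have hsep : ∃ c > (0:ℝ), ∀ u ∈ Icc (0:ℝ) 1, ∀ v ∈ Icc (0:ℝ) 1, dist (h u) (h v) < c →
      dist u v < η := by
    let P : Set (ℝ × ℝ) := (Icc (0:ℝ) 1 ×ˢ Icc (0:ℝ) 1) ∩ {p | η ≤ dist p.1 p.2}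
    have hP : IsCompact P := (isCompact_Icc.prod isCompact_Icc).inter_right
      (isClosed_le continuous_const (continuous_fst.dist continuous_snd))
    have hPc : ContinuousOn (fun p : ℝ × ℝ => dist (h p.1) (h p.2)) P := by
      have h1 : ContinuousOn (fun p : ℝ × ℝ => h p.1) P :=
        hcont.comp continuous_fst.continuousOn fun p hp => hp.1.1
      have h2 : ContinuousOn (fun p : ℝ × ℝ => h p.2) P :=
        hcont.comp continuous_snd.continuousOn fun p hp => hp.1.2
      exact continuous_dist.comp_continuousOn (h1.prodMk h2)
    rcases P.eq_empty_or_nonempty with hPe | hPne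
    · refine ⟨1, one_pos, fun u hu v hv _ => ?_⟩
      by_contra hcon
      have : (u, v) ∈ P := ⟨⟨hu, hv⟩, not_lt.1 hcon⟩
      rw [hPe] at this; exact this
    · obtain ⟨p, hp, hmin⟩ := hP.exists_isMinOn hPne hPc
      refine ⟨dist (h p.1) (h p.2), ?_, fun u hu v hv huv => ?_⟩
      · rw [gt_iff_lt, dist_pos]
        intro heq
        have h1 := hinj hp.1.1 hp.1.2 heq
        have h2 : η ≤ dist p.1 p.2 := hp.2
        rw [h1, dist_self] at h2
        linarith
      · by_contra hcon
        have : (u, v) ∈ P := ⟨⟨hu, hv⟩, not_lt.1 hcon⟩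
        exact absurd (hmin this) (not_le.2 huv)
  obtain ⟨c, hc, hsep⟩ := hsep
  refine ⟨c, hc, fun u hu v hv => ?_⟩
  by_cases hcd : c ≤ dist (h u) (h v)
  · exact Or.inr (Or.inl hcd)
  have huv := hsep u hu v hv (not_le.1 hcd)
  obtain ⟨o, ho⟩ := hleb u hu
  have hball : uIcc u v ⊆ Metric.ball u η := by
    intro x hx
    rw [Metric.mem_ball, Real.dist_eq]
    rw [dist_comm, Real.dist_eq] at huv
    exact (abs_sub_left_of_mem_uIcc hx).trans_lt huv
  have huI : uIcc u v ⊆ Icc (0:ℝ) 1 := (convex_Icc (0:ℝ) 1).ordConnected.uIcc_subset hu hv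
  rcases o with _ | i
  · left
    rw [eq_empty_iff_forall_notMem]
    rintro _ ⟨⟨x, hx, rfl⟩, hxE⟩
    exact ho (hball hx) ⟨huI hx, hxE⟩
  · right; right
    have hI : uIcc u v ⊆ Ioo (a i) (b i) := hball.trans ho
    obtain ⟨u', hu', rfl⟩ := gsurj i u (Ioo_subset_Icc_self (hI left_mem_uIcc))
    obtain ⟨v', hv', rfl⟩ := gsurj i v (Ioo_subset_Icc_self (hI right_mem_uIcc))
    refine ⟨i, u', hu', v', hv', (hg i u' hu').2, (hg i v' hv').2, ?_⟩
    rintro _ ⟨⟨x, hx, rfl⟩, hxE⟩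
    obtain ⟨j, w, hw, hwE, hxw, hxj⟩ := hEloc x (huI hx) hxE
    have hij : j = i := by
      by_contra hne
      have hxi := hI hx
      rcases hord j i hne with hh | hh
      · linarith [hxi.1, hxj.2]
      · linarith [hxi.2, hxj.1]
    subst hij
    refine ⟨h w, ⟨⟨w, ?_, rfl⟩, hwE⟩, ?_⟩
    · rw [hxw] at hx
      rw [mem_uIcc] at hx ⊢
      rcases gmono j with hm | hm
      · rwa [hm.le_iff_le hu' hw, hm.le_iff_le hw hv', hm.le_iff_le hv' hw,
          hm.le_iff_le hw hu'] at hx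
      · rw [hm.le_iff_ge hu' hw, hm.le_iff_ge hw hv', hm.le_iff_ge hv' hw,
          hm.le_iff_ge hw hu'] at hx
        tauto
    · rw [hxw, (hg j w hw).2]

lemma wk_holder {X : Type*} [MetricSpace X] [MeasurableSpace X] [BorelSpace X]
    {N : ℕ} (hN : 0 < N) (φ : Fin N → X → X)
    (ρ : Fin N → ℝ) (hρ : ∀ i, ρ i ∈ Set.Ioo (0 : ℝ) 1)
    (hsim : ∀ i x y, dist (φ i x) (φ i y) = ρ i * dist x y)
    (E : Set X) (h : ℝ → X) (s : ℝ) (hs : 0 < s) (hfin : μH[s] E < ⊤)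
    (c : ℝ) (hc : 0 < c)
    (hstep : ∀ u ∈ Icc (0:ℝ) 1, ∀ v ∈ Icc (0:ℝ) 1,
      (h '' uIcc u v ∩ E = ∅) ∨ c ≤ dist (h u) (h v) ∨
      ∃ i, ∃ u' ∈ Icc (0:ℝ) 1, ∃ v' ∈ Icc (0:ℝ) 1, h u = φ i (h u') ∧ h v = φ i (h v') ∧
        h '' uIcc u v ∩ E ⊆ φ i '' (h '' uIcc u' v' ∩ E)) :
    ∃ L ≥ (0:ℝ), ∀ u ∈ Icc (0:ℝ) 1, ∀ v ∈ Icc (0:ℝ) 1, 0 < dist (h u) (h v) →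
      (μH[s] (h '' uIcc u v ∩ E)).toReal ≤ L * dist (h u) (h v) ^ s := by
  haveI : Nonempty (Fin N) := ⟨⟨0, hN⟩⟩
  obtain ⟨i₀, hi₀⟩ := Finite.exists_max ρ
  have hfin' : ∀ A : Set X, μH[s] (A ∩ E) ≠ ⊤ := fun A =>
    ((measure_mono inter_subset_right).trans_lt hfin).ne
  have hL : 0 ≤ (μH[s] E).toReal / c ^ s := by positivity
  refine ⟨(μH[s] E).toReal / c ^ s, hL, ?_⟩
  have big : ∀ u v, c ≤ dist (h u) (h v) → (μH[s] (h '' uIcc u v ∩ E)).toReal ≤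
      (μH[s] E).toReal / c ^ s * dist (h u) (h v) ^ s := by
    intro u v hd
    have h1 : (μH[s] (h '' uIcc u v ∩ E)).toReal ≤ (μH[s] E).toReal :=
      ENNReal.toReal_mono hfin.ne (measure_mono inter_subset_right)
    have h2 : c ^ s ≤ dist (h u) (h v) ^ s := Real.rpow_le_rpow hc.le hd hs.le
    have h3 : 0 < c ^ s := Real.rpow_pos_of_pos hc s
    refine h1.trans ?_
    rw [div_mul_eq_mul_div, le_div_iff₀ h3]
    exact mul_le_mul_of_nonneg_left h2 ENNReal.toReal_nonneg
  have key : ∀ n : ℕ, ∀ u ∈ Icc (0:ℝ) 1, ∀ v ∈ Icc (0:ℝ) 1, c * ρ i₀ ^ n ≤ dist (h u) (h v) →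
      (μH[s] (h '' uIcc u v ∩ E)).toReal ≤
        (μH[s] E).toReal / c ^ s * dist (h u) (h v) ^ s := by
    intro n
    induction n with
    | zero => intro u _ v _ hd; exact big u v (by simpa using hd)
    | succ n ih =>
      intro u hu v hv hd
      rcases hstep u hu v hv with he | hb | ⟨i, u', hu', v', hv', h1, h2, h3⟩
      · rw [he, measure_empty, ENNReal.toReal_zero]
        positivity
      · exact big u v hb
      · have hpos := (hρ i).1
        have hd' : dist (h u) (h v) = ρ i * dist (h u') (h v') := by rw [h1, h2, hsim]
        have hle : c * ρ i₀ ^ n ≤ dist (h u') (h v') := by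
          have h4 : ρ i₀ * (c * ρ i₀ ^ n) ≤ ρ i₀ * dist (h u') (h v') := by
            calc ρ i₀ * (c * ρ i₀ ^ n) = c * ρ i₀ ^ (n + 1) := by ring
              _ ≤ ρ i * dist (h u') (h v') := hd' ▸ hd
              _ ≤ _ := mul_le_mul_of_nonneg_right (hi₀ i) dist_nonneg
          exact le_of_mul_le_mul_left h4 (hρ i₀).1
        have ih' := ih u' hu' v' hv' hle
        have hlip : LipschitzWith (ρ i).toNNReal (φ i) :=
          LipschitzWith.of_dist_le_mul fun x y => by
            rw [hsim, Real.coe_toNNReal _ hpos.le]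
        have hm : μH[s] (h '' uIcc u v ∩ E) ≤
            ((ρ i).toNNReal : ENNReal) ^ s * μH[s] (h '' uIcc u' v' ∩ E) :=
          (measure_mono h3).trans (hlip.hausdorffMeasure_image_le hs.le _)
        have hm' : (μH[s] (h '' uIcc u v ∩ E)).toReal ≤
            ρ i ^ s * (μH[s] (h '' uIcc u' v' ∩ E)).toReal := by
          have := ENNReal.toReal_mono (ENNReal.mul_ne_top
            (ENNReal.rpow_ne_top_of_nonneg hs.le ENNReal.coe_ne_top) (hfin' _)) hm
          rwa [ENNReal.toReal_mul, ← ENNReal.toReal_rpow, ENNReal.coe_toReal,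
            Real.coe_toNNReal _ hpos.le] at this
        rw [hd', Real.mul_rpow hpos.le dist_nonneg]
        calc _ ≤ _ := hm'
          _ ≤ ρ i ^ s * ((μH[s] E).toReal / c ^ s * dist (h u') (h v') ^ s) :=
            mul_le_mul_of_nonneg_left ih' (Real.rpow_nonneg hpos.le s)
          _ = _ := by ring
  intro u hu v hv hd
  obtain ⟨n, hn⟩ := exists_pow_lt_of_lt_one (div_pos hd hc) (hρ i₀).2
  refine key n u hu v hv ?_
  rw [lt_div_iff₀ hc] at hn
  linarith

lemma wk_diff {X : Type*} [MetricSpace X] [MeasurableSpace X] [BorelSpace X]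
    (E : Set X) (h : ℝ → X) (s : ℝ) (hfin : μH[s] E < ⊤) (u v : ℝ) :
    |(μH[s] (h '' Icc 0 u ∩ E)).toReal - (μH[s] (h '' Icc 0 v ∩ E)).toReal| ≤
      (μH[s] (h '' uIcc u v ∩ E)).toReal := by
  have hfin' : ∀ A : Set X, μH[s] (A ∩ E) ≠ ⊤ := fun A =>
    ((measure_mono inter_subset_right).trans_lt hfin).ne
  have main : ∀ u v : ℝ, (μH[s] (h '' Icc 0 u ∩ E)).toReal ≤
      (μH[s] (h '' Icc 0 v ∩ E)).toReal + (μH[s] (h '' uIcc u v ∩ E)).toReal := by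
    intro u v
    rw [← ENNReal.toReal_add (hfin' _) (hfin' _)]
    refine ENNReal.toReal_mono (ENNReal.add_ne_top.2 ⟨hfin' _, hfin' _⟩) ?_
    refine (measure_mono ?_).trans (measure_union_le _ _)
    rintro _ ⟨⟨x, hx, rfl⟩, hxE⟩
    rcases le_total x v with hxv | hxv
    · exact Or.inl ⟨⟨x, ⟨hx.1, hxv⟩, rfl⟩, hxE⟩
    · exact Or.inr ⟨⟨x, mem_uIcc.2 (Or.inr ⟨hxv, hx.2⟩), rfl⟩, hxE⟩
  have h1 := main u v
  have h2 := main v u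
  rw [uIcc_comm v u] at h2
  rw [abs_le]
  constructor <;> linarith

/-- The key estimate in the proof of Theorem 1.2: with `K` an arc (parametrized by `h`)
which is the attractor of the IFS with condensation `{C_1 ∪ ⋯ ∪ C_m; φ_1, …, φ_N}` and
decomposes as a rearrangement of the `C_j` and `φ_i(K)` starting and ending with
condensation pieces, and with `E` the attractor of `{φ_1, …, φ_N}` of Hausdorff
dimension `s > 1` and finite `H^s` measure, the function
`f(z) = H^s(h([0, h⁻¹ z]) ∩ E)` satisfies `|f z₁ - f z₂| = o(|z₁ - z₂|)` uniformly. -/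
theorem key_estimate_of_whitney_construction
    (d N m : ℕ) (hm : 2 ≤ m)
    -- the contractive similitudes φ_1, …, φ_N
    (φ : Fin N → EuclideanSpace ℝ (Fin d) → EuclideanSpace ℝ (Fin d))
    (ρ : Fin N → ℝ) (hρ : ∀ i, ρ i ∈ Set.Ioo (0 : ℝ) 1)
    (hsim : ∀ i x y, dist (φ i x) (φ i y) = ρ i * dist x y)
    -- the condensation set C = C_1 ∪ ⋯ ∪ C_m, a disjoint union of arcs
    (C : Fin m → Set (EuclideanSpace ℝ (Fin d)))
    (hCarc : ∀ j, ∃ g : ℝ → EuclideanSpace ℝ (Fin d), ContinuousOn g (Set.Icc 0 1) ∧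
      Set.InjOn g (Set.Icc 0 1) ∧ g '' Set.Icc 0 1 = C j)
    (hCdisj : Pairwise fun j j' => Disjoint (C j) (C j'))
    -- K is the attractor of the IFS with condensation {C; φ_1, …, φ_N}
    (K : Set (EuclideanSpace ℝ (Fin d)))
    (hKne : K.Nonempty) (hKcomp : IsCompact K)
    (hK : K = (⋃ j, C j) ∪ ⋃ i, φ i '' K)
    -- K is an arc, parametrized by h, decomposing as γ_1 + ⋯ + γ_{m+N},
    -- a rearrangement (via σ) of C_1, …, C_m, φ_1(K), …, φ_N(K)
    (h : ℝ → EuclideanSpace ℝ (Fin d))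
    (hcont : ContinuousOn h (Set.Icc 0 1)) (hinj : Set.InjOn h (Set.Icc 0 1))
    (himg : h '' Set.Icc 0 1 = K)
    (t : Fin (m + N + 1) → ℝ) (ht0 : t 0 = 0) (htlast : t (Fin.last (m + N)) = 1)
    (htmono : StrictMono t)
    (σ : Fin (m + N) ≃ (Fin m ⊕ Fin N))
    (hdecomp : ∀ ℓ : Fin (m + N),
      h '' Set.Icc (t ℓ.castSucc) (t ℓ.succ)
        = Sum.elim C (fun i => φ i '' K) (σ ℓ))
    (hfirst : (σ ⟨0, by omega⟩).isLeft = true)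
    (hlast : (σ ⟨m + N - 1, by omega⟩).isLeft = true)
    -- E is the attractor of {φ_1, …, φ_N}, with s := dim_H E > 1 and H^s(E) < ∞
    (E : Set (EuclideanSpace ℝ (Fin d)))
    (hEne : E.Nonempty) (hEcomp : IsCompact E)
    (hE : E = ⋃ i, φ i '' E)
    (s : ℝ) (hs : dimH E = ENNReal.ofReal s) (hs1 : 1 < s)
    (hfin : μH[s] E < ⊤) :
    -- the conclusion: with f (h t) = H^s(h([0,t]) ∩ E), one has
    -- |f z₁ - f z₂| ≤ ε |z₁ - z₂| whenever 0 < |z₁ - z₂| < δ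
    ∀ ε > (0 : ℝ), ∃ δ > (0 : ℝ), ∀ t₁ ∈ Set.Icc (0 : ℝ) 1, ∀ t₂ ∈ Set.Icc (0 : ℝ) 1,
      0 < dist (h t₁) (h t₂) → dist (h t₁) (h t₂) < δ →
      |(μH[s] (h '' Set.Icc 0 t₁ ∩ E)).toReal - (μH[s] (h '' Set.Icc 0 t₂ ∩ E)).toReal|
        ≤ ε * dist (h t₁) (h t₂) := by
  have hφc : ∀ i, Continuous (φ i) := fun i =>
    (LipschitzWith.of_dist_le_mul (K := (ρ i).toNNReal) fun x y => by
      rw [hsim, Real.coe_toNNReal _ (hρ i).1.le]).continuous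
  have hφi : ∀ i, Function.Injective (φ i) := by
    intro i x y hxy
    have h1 := hsim i x y
    rw [hxy, dist_self] at h1
    rcases mul_eq_zero.1 h1.symm with h2 | h2
    · exact absurd h2 (hρ i).1.ne'
    · exact dist_eq_zero.1 h2
  have hN : 0 < N := by
    rcases Nat.eq_zero_or_pos N with h0 | h0
    · subst h0
      obtain ⟨x, hx⟩ := hEne
      rw [hE] at hx
      obtain ⟨i, _⟩ := mem_iUnion.1 hx
      exact i.elim0
    · exact h0
  have hEK : E ⊆ K := wk_subset φ ρ hρ hsim K E hKne hKcomp (by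
    intro i x hx
    rw [hK]
    exact Or.inr (mem_iUnion.2 ⟨i, mem_image_of_mem _ hx⟩)) hEne hEcomp hE
  have hl0 : ∀ i : Fin N, (σ.symm (Sum.inr i)).val ≠ 0 := by
    intro i h0
    have h1 : σ.symm (Sum.inr i) = ⟨0, by omega⟩ := Fin.ext h0
    rw [← h1, Equiv.apply_symm_apply] at hfirst
    simp at hfirst
  have hl1 : ∀ i : Fin N, (σ.symm (Sum.inr i)).val ≠ m + N - 1 := by
    intro i h0
    have h1 : σ.symm (Sum.inr i) = ⟨m + N - 1, by omega⟩ := Fin.ext h0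
    rw [← h1, Equiv.apply_symm_apply] at hlast
    simp at hlast
  obtain ⟨c, hc, hstep⟩ := wk_step φ hφc hφi K E hEK hEcomp hE h hcont hinj himg
    (fun i => t (σ.symm (Sum.inr i)).castSucc) (fun i => t (σ.symm (Sum.inr i)).succ)
    (by
      intro i
      rw [← ht0]
      apply htmono
      rw [Fin.lt_def]
      have := hl0 i
      simp only [Fin.val_zero, Fin.val_castSucc]
      omega)
    (by
      intro i
      rw [← htlast]
      apply htmono
      rw [Fin.lt_def]
      have := hl1 i
      have := (σ.symm (Sum.inr i)).isLt
      simp only [Fin.val_last, Fin.val_succ]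
      omega)
    (by
      intro i
      rw [hdecomp, Equiv.apply_symm_apply]
      rfl)
    (by
      intro i j hij
      have hne : (σ.symm (Sum.inr i)).val ≠ (σ.symm (Sum.inr j)).val := by
        intro hh
        apply hij
        have := σ.symm.injective (Fin.ext hh)
        exact Sum.inr_injective this
      rcases lt_or_gt_of_ne hne with hlt | hlt
      · left
        apply htmono.monotone
        rw [Fin.le_def]
        simp only [Fin.val_succ, Fin.val_castSucc]
        omega
      · right
        apply htmono.monotone
        rw [Fin.le_def]
        simp only [Fin.val_succ, Fin.val_castSucc]
        omega)
  obtain ⟨L, hL, hol⟩ := wk_holder hN φ ρ hρ hsim E h s (by linarith) hfin c hc hstep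
  intro ε hε
  have hs0 : 0 < s - 1 := by linarith
  have hq : 0 < ε / (L + 1) := by positivity
  refine ⟨(ε / (L + 1)) ^ (s - 1)⁻¹, Real.rpow_pos_of_pos hq _, ?_⟩
  intro t₁ h1 t₂ h2 hd hlt
  refine (wk_diff E h s hfin t₁ t₂).trans ((hol t₁ h1 t₂ h2 hd).trans ?_)
  have hp : dist (h t₁) (h t₂) ^ (s - 1) ≤ ε / (L + 1) := by
    have := Real.rpow_le_rpow hd.le hlt.le hs0.le
    rwa [Real.rpow_inv_rpow hq.le hs0.ne'] at this
  have hsplit : dist (h t₁) (h t₂) ^ s = dist (h t₁) (h t₂) ^ (s - 1) * dist (h t₁) (h t₂) := by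
    rw [Real.rpow_sub_one hd.ne', div_mul_cancel₀ _ hd.ne']
  rw [hsplit, ← mul_assoc]
  refine mul_le_mul_of_nonneg_right ?_ hd.le
  calc L * dist (h t₁) (h t₂) ^ (s - 1) ≤ L * (ε / (L + 1)) := mul_le_mul_of_nonneg_left hp hL
    _ ≤ (L + 1) * (ε / (L + 1)) := mul_le_mul_of_nonneg_right (by linarith) hq.le
    _ = ε := by field_simp
end
end

section
/- Let φ_1, …, φ_N be contractive similitudes on ℝ^d, let C ⊆ ℝ^d be a nonempty compact set whose connected components are C_1, …, C_m (each compact), and let K be the attractor of the IFS with condensation {C; φ_1, …, φ_N}. Form the graph whose vertices are the sets φ_1(K), …, φ_N(K), C_1, …, C_m, with an edge between two vertices U and V if and only if U ∩ V ≠ ∅. If this graph is connected (any two vertices are joined by a path), then K is connected. -/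
open Set

noncomputable section

/-- If the Hata graph of an IFS with condensation (vertices `φ_1(K), …, φ_N(K),
C_1, …, C_m`; edges between distinct intersecting vertices) is connected, then the
attractor `K` is connected. -/
theorem ifs_with_condensation_connected_of_hata_graph_connected
    (d N m : ℕ)
    -- the contractive similitudes φ_1, …, φ_N
    (φ : Fin N → EuclideanSpace ℝ (Fin d) → EuclideanSpace ℝ (Fin d))
    (ρ : Fin N → ℝ) (hρ : ∀ i, ρ i ∈ Set.Ioo (0 : ℝ) 1)
    (hsim : ∀ i x y, dist (φ i x) (φ i y) = ρ i * dist x y)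
    -- C is nonempty compact with connected components C_1, …, C_m (each compact)
    (C : Fin m → Set (EuclideanSpace ℝ (Fin d)))
    (hCcomp : ∀ j, IsCompact (C j)) (hCconn : ∀ j, IsConnected (C j))
    (hCdisj : Pairwise fun j j' => Disjoint (C j) (C j'))
    -- K is the attractor of the IFS with condensation {C; φ_1, …, φ_N}
    (K : Set (EuclideanSpace ℝ (Fin d)))
    (hKne : K.Nonempty) (hKcomp : IsCompact K)
    (hK : K = (⋃ j, C j) ∪ ⋃ i, φ i '' K)
    -- the Hata graph
    (G : SimpleGraph (Fin N ⊕ Fin m))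
    (hG : ∀ u v, G.Adj u v ↔ u ≠ v ∧
      (Sum.elim (fun i => φ i '' K) C u ∩ Sum.elim (fun i => φ i '' K) C v).Nonempty)
    (hGconn : G.Connected) :
    IsConnected K := by
  classical
  set S : Fin N ⊕ Fin m → Set (EuclideanSpace ℝ (Fin d)) :=
    Sum.elim (fun i => φ i '' K) C with hS
  -- a uniform contraction ratio
  obtain ⟨r, hr0, hr1, hr⟩ : ∃ r : ℝ, 0 < r ∧ r < 1 ∧ ∀ i, ρ i ≤ r := by
    rcases isEmpty_or_nonempty (Fin N) with h | h
    · exact ⟨1 / 2, by norm_num, by norm_num, fun i => h.elim i⟩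
    · obtain ⟨i, hi⟩ := Finite.exists_max ρ
      exact ⟨ρ i, (hρ i).1, (hρ i).2, hi⟩
  have hSK : ∀ u, S u ⊆ K := by
    intro u x hx
    rw [hK]
    cases u with
    | inl i => exact Or.inr (mem_iUnion.2 ⟨i, hx⟩)
    | inr j => exact Or.inl (mem_iUnion.2 ⟨j, hx⟩)
  have hKS : ∀ x ∈ K, ∃ u, x ∈ S u := by
    intro x hx
    rw [hK] at hx
    rcases hx with hx | hx
    · obtain ⟨j, hj⟩ := mem_iUnion.1 hx
      exact ⟨Sum.inr j, hj⟩
    · obtain ⟨i, hi⟩ := mem_iUnion.1 hx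
      exact ⟨Sum.inl i, hi⟩
  -- a function constant at some positive scale on `K` is constant on `K`
  have key : ∀ n : ℕ, ∀ f : EuclideanSpace ℝ (Fin d) → Bool,
      (∀ x ∈ K, ∀ y ∈ K, dist x y < r ^ n * (Metric.diam K + 1) → f x = f y) →
      ∀ x ∈ K, ∀ y ∈ K, f x = f y := by
    intro n
    induction n with
    | zero =>
      intro f hf x hx y hy
      apply hf x hx y hy
      have := Metric.dist_le_diam_of_mem hKcomp.isBounded hx hy
      linarith
    | succ n ih =>
      intro f hf
      have hε : 0 < r ^ (n + 1) * (Metric.diam K + 1) := by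
        have : 0 ≤ Metric.diam K := Metric.diam_nonneg
        positivity
      have hconst : ∀ u, ∀ x ∈ S u, ∀ y ∈ S u, f x = f y := by
        intro u
        cases u with
        | inl i =>
          have hmem : ∀ x ∈ K, φ i x ∈ K := fun x hx => hSK (Sum.inl i) ⟨x, hx, rfl⟩
          have := ih (fun x => f (φ i x)) (by
            intro x hx y hy hxy
            apply hf _ (hmem x hx) _ (hmem y hy)
            rw [hsim, pow_succ']
            calc ρ i * dist x y ≤ r * dist x y :=
                  mul_le_mul_of_nonneg_right (hr i) dist_nonneg
              _ < r * (r ^ n * (Metric.diam K + 1)) := mul_lt_mul_of_pos_left hxy hr0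
              _ = _ := by ring)
          rintro _ ⟨x, hx, rfl⟩ _ ⟨y, hy, rfl⟩
          exact this x hx y hy
        | inr j =>
          have hc : ContinuousOn f (C j) := by
            intro x hx
            have : ∀ᶠ y in nhdsWithin x (C j), f y = f x := by
              filter_upwards [self_mem_nhdsWithin,
                mem_nhdsWithin_of_mem_nhds (Metric.ball_mem_nhds x hε)] with y hy hy2
              exact hf y (hSK (Sum.inr j) hy) x (hSK (Sum.inr j) hx) hy2
            exact tendsto_nhds_of_eventually_eq this
          intro x hx y hy
          exact (hCconn j).isPreconnected.constant hc hx hy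
      have hwalk : ∀ u v, G.Walk u v → ∀ x ∈ S u, ∀ y ∈ S v, f x = f y := by
        intro u v p
        induction p with
        | nil => exact hconst _
        | cons h p ih2 =>
          intro x hx y hy
          obtain ⟨z, hz1, hz2⟩ := ((hG _ _).1 h).2
          exact (hconst _ x hx z hz1).trans (ih2 z hz2 y hy)
      intro x hx y hy
      obtain ⟨u, hu⟩ := hKS x hx
      obtain ⟨v, hv⟩ := hKS y hy
      obtain ⟨p⟩ := hGconn.preconnected u v
      exact hwalk u v p x hu y hv
  refine ⟨hKne, isPreconnected_of_forall_constant ?_⟩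
  intro f hf x hx y hy
  have huc := hKcomp.uniformContinuousOn_of_continuous hf
  obtain ⟨δ, hδ, hδ2⟩ : ∃ δ > 0, ∀ x ∈ K, ∀ y ∈ K, dist x y < δ → f x = f y := by
    have hev := huc (show {p : Bool × Bool | p.1 = p.2} ∈ uniformity Bool by
      rw [DiscreteUniformity.eq_principal_setRelId]
      exact fun p hp => hp)
    rw [Filter.mem_map, Filter.mem_inf_principal, Metric.mem_uniformity_dist] at hev
    obtain ⟨δ, hδ, h⟩ := hev
    exact ⟨δ, hδ, fun x hx y hy hxy => h hxy ⟨hx, hy⟩⟩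
  have hD : 0 < Metric.diam K + 1 := by
    have : 0 ≤ Metric.diam K := Metric.diam_nonneg
    positivity
  obtain ⟨n, hn⟩ := exists_pow_lt_of_lt_one (div_pos hδ hD) hr1
  rw [lt_div_iff₀ hD] at hn
  exact key n f (fun x hx y hy h => hδ2 x hx y hy (h.trans hn)) x hx y hy
end
end
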